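/- (Theorem 8, destructive POV with multiple candidates) Assume Δ_D ≥ 1. Let k ∈ ℕ, β a real with β > Δ_D, and α = Δ_D/β. Suppose S_β ⊆ V with |S_β| ≤ k satisfies Σ_{y ⊆ E} w(y)·min(β, f(S_β, y, A')) ≥ (1 − 1/e) · Σ_{y ⊆ E} w(y)·min(β, f(S', y, A')) for every S' ⊆ V with |S'| ≤ k (as the greedy step of POVDestructive guarantees). Then Σ_{y : m_D(S_β, y) ≥ Δ_D} w(y) ≥ (((e − 1)/(3e − 1))·OPT_D(β) − α)/(1 − α), where OPT_D(t) = max over S' ⊆ V with |S'| ≤ k of Σ_{y : m_D(S', y) ≥ t} w(y). In particular, the output of POVDestructive (the best S_β over all β) achieves POV_D at least max_{0 < α < 1} (((e − 1)/(3e − 1))·OPT_D(Δ_D/α) − α)/(1 − α). -/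

import Mathlib

/-!
Write `f = f(S, y, A')`. The bonus term of `m_D` lies between `0` (take a candidate of `J` with the
most first-choice voters) and `f` (as `A' ∩ C_c ⊆ A'` and `|B_c| ≤ max |B_c'|`), so
`f ≤ m_D ≤ 2 f` (`reachCount_le_mD`, `mD_le_two_mul_reachCount`).

For an optimal seed set, `m_D ≥ β` forces `min β f ≥ β / 2`, so the surrogate is at least
`(β / 2) · OPT_D(β)`; the greedy set gets at least a `1 - 1/e` fraction of this. Conversely, its
surrogate value is at most `β Q + Δ_D (1 - Q)`, where `Q` is the probability that
`m_D ≥ Δ_D`, because `f ≤ m_D < Δ_D` off that event. Dividing by `β` gives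
`((e - 1) / (2 e)) · OPT_D(β) ≤ Q (1 - α) + α`, and `(e - 1) / (3 e - 1) ≤ (e - 1) / (2 e)`.
-/

open Finset

attribute [local instance] Classical.propDecidable

/-- Number of nodes of `A` reachable from seed set `S` in scenario `y`. -/
noncomputable def reachCount {V : Type*} (y : Finset (V × V)) (S A : Finset V) : ℕ :=
  (A.filter (fun v => ∃ s ∈ S, Relation.ReflTransGen (fun a b => (a, b) ∈ y) s v)).card

/-- Probability of the live-graph scenario `y ⊆ E` under edge probabilities `p`. -/
noncomputable def sceneWeight {V : Type*} (E : Finset (V × V)) (p : V × V → ℝ)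
    (y : Finset (V × V)) : ℝ :=
  (∏ e ∈ y, p e) * (∏ e ∈ E \ y, (1 - p e))

/-- Voters whose second choice is `c`. -/
noncomputable def secondFor {V C : Type*} [Fintype V] (π₂ : V → C) (c : C) : Finset V :=
  Finset.univ.filter (fun v => π₂ v = c)

/-- Voters whose first choice is `c`. -/
noncomputable def firstFor {V C : Type*} [Fintype V] (π₁ : V → C) (c : C) : Finset V :=
  Finset.univ.filter (fun v => π₁ v = c)

/-- Destructive change in margin in scenario `y` under seed set `S`:
`m_D(S, y) = f(S, y, A') + max_{c ∈ J} ( f(S, y, A' ∩ C_c) + |B_c| − max_{c' ∈ J} |B_{c'}| )`,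
where `A' = {v : π₁ v = c*}`, `B_c = {v : π₁ v = c}` and `C_c = {v : π₂ v = c}`. -/
noncomputable def mD {V C : Type*} [Fintype V] (J : Finset C) (hJ : J.Nonempty)
    (π₁ π₂ : V → C) (cstar : C) (S : Finset V) (y : Finset (V × V)) : ℝ :=
  (reachCount y S (firstFor π₁ cstar) : ℝ) +
    J.sup' hJ (fun c =>
      (reachCount y S (firstFor π₁ cstar ∩ secondFor π₂ c) : ℝ) +
        ((firstFor π₁ c).card : ℝ) - J.sup' hJ (fun c' => ((firstFor π₁ c').card : ℝ)))

/-- `OPT_D(t)`: the maximum, over seed sets `S'` of size at most `k`, of the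
probability that the destructive change in margin is at least `t`. -/
noncomputable def OPTD {V C : Type*} [Fintype V] (E : Finset (V × V)) (p : V × V → ℝ)
    (J : Finset C) (hJ : J.Nonempty) (π₁ π₂ : V → C) (cstar : C) (k : ℕ) (t : ℝ) : ℝ :=
  (Finset.univ.powerset.filter (fun S : Finset V => S.card ≤ k)).sup' ⟨∅, by simp⟩
    (fun S => ∑ y ∈ E.powerset.filter (fun y => t ≤ mD J hJ π₁ π₂ cstar S y),
      sceneWeight E p y)

lemma sceneWeight_nonneg {V : Type*} {E : Finset (V × V)} {p : V × V → ℝ}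
    (hp : ∀ e ∈ E, 0 ≤ p e ∧ p e ≤ 1) {y : Finset (V × V)} (hy : y ⊆ E) :
    0 ≤ sceneWeight E p y :=
  mul_nonneg (prod_nonneg fun e he => (hp e (hy he)).1)
    (prod_nonneg fun e he => sub_nonneg.2 (hp e (mem_sdiff.1 he).1).2)

/-- The scenario weights sum to one: expand `∏ e ∈ E, (p e + (1 - p e))`. -/
lemma sum_sceneWeight {V : Type*} (E : Finset (V × V)) (p : V × V → ℝ) :
    ∑ y ∈ E.powerset, sceneWeight E p y = 1 := by
  have h := Finset.prod_add p (fun e => 1 - p e) E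
  simp only [add_sub_cancel, prod_const_one] at h
  rw [h]
  refine sum_congr rfl fun y _ => ?_
  unfold sceneWeight
  congr!

lemma reachCount_le_mD {V C : Type*} [Fintype V] (J : Finset C) (hJ : J.Nonempty)
    (π₁ π₂ : V → C) (cstar : C) (S : Finset V) (y : Finset (V × V)) :
    (reachCount y S (firstFor π₁ cstar) : ℝ) ≤ mD J hJ π₁ π₂ cstar S y := by
  unfold mD
  obtain ⟨c, hc, hmax⟩ := exists_mem_eq_sup' hJ (fun c' => ((firstFor π₁ c').card : ℝ))
  refine le_add_of_nonneg_right (le_trans ?_ (le_sup' _ hc))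
  rw [hmax]
  simp

lemma mD_le_two_mul_reachCount {V C : Type*} [Fintype V] (J : Finset C) (hJ : J.Nonempty)
    (π₁ π₂ : V → C) (cstar : C) (S : Finset V) (y : Finset (V × V)) :
    mD J hJ π₁ π₂ cstar S y ≤ 2 * (reachCount y S (firstFor π₁ cstar) : ℝ) := by
  unfold mD
  rw [two_mul]
  refine add_le_add_right (sup'_le _ _ fun c hc => ?_) _
  have h1 : ((firstFor π₁ c).card : ℝ) ≤ J.sup' hJ (fun c' => ((firstFor π₁ c').card : ℝ)) :=
    le_sup' (fun c' => ((firstFor π₁ c').card : ℝ)) hc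
  have h2 : (reachCount y S (firstFor π₁ cstar ∩ secondFor π₂ c) : ℝ) ≤
      reachCount y S (firstFor π₁ cstar) :=
    Nat.cast_le.2 (card_le_card (filter_subset_filter _ inter_subset_left))
  linarith

/-- Theorem 8, destructive POV with multiple candidates: with
`Δ_D = |{v : π₁ v = c*}| − max_{c ∈ J} |B_c| + 1 ≥ 1`, `β > Δ_D`, `α = Δ_D/β`, if `S_β`
(of size at most `k`) is a `(1 − 1/e)`-approximate maximizer of the truncated surrogate
`Σ_y w(y)·min(β, f(S, y, A'))` with `A' = {v : π₁ v = c*}`, then the probability that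
the destructive change in margin reaches `Δ_D` is at least
`(((e − 1)/(3e − 1))·OPT_D(β) − α)/(1 − α)`. -/
theorem povD_multicandidate_bicriteria {V C : Type*} [Fintype V]
    (E : Finset (V × V)) (p : V × V → ℝ) (hp : ∀ e ∈ E, 0 ≤ p e ∧ p e ≤ 1)
    (J : Finset C) (hJ : J.Nonempty) (π₁ π₂ : V → C) (cstar : C)
    (hdist : ∀ v, π₁ v ≠ π₂ v) (k : ℕ) (ΔD β α : ℝ)
    (hΔdef : ΔD = ((firstFor π₁ cstar).card : ℝ) -
      J.sup' hJ (fun c => ((firstFor π₁ c).card : ℝ)) + 1)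
    (hΔ : 1 ≤ ΔD) (hβ : ΔD < β) (hα : α = ΔD / β)
    (Sβ : Finset V) (hSβ : Sβ.card ≤ k)
    (hgreedy : ∀ S' : Finset V, S'.card ≤ k →
      (1 - 1 / Real.exp 1) *
          ∑ y ∈ E.powerset, sceneWeight E p y * min β (reachCount y S' (firstFor π₁ cstar) : ℝ) ≤
        ∑ y ∈ E.powerset, sceneWeight E p y * min β (reachCount y Sβ (firstFor π₁ cstar) : ℝ)) :
    ((Real.exp 1 - 1) / (3 * Real.exp 1 - 1) * OPTD E p J hJ π₁ π₂ cstar k β - α) / (1 - α) ≤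
      ∑ y ∈ E.powerset.filter (fun y => ΔD ≤ mD J hJ π₁ π₂ cstar Sβ y),
        sceneWeight E p y := by
  have hβ0 : 0 < β := by linarith
  have hw : ∀ y ∈ E.powerset, 0 ≤ sceneWeight E p y := fun y hy =>
    sceneWeight_nonneg hp (mem_powerset.1 hy)
  obtain ⟨S, hS, hopt⟩ : ∃ S : Finset V, S.card ≤ k ∧ OPTD E p J hJ π₁ π₂ cstar k β =
      ∑ y ∈ E.powerset.filter (fun y => β ≤ mD J hJ π₁ π₂ cstar S y), sceneWeight E p y := by
    obtain ⟨S, hS, h⟩ := exists_mem_eq_sup'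
      (s := Finset.univ.powerset.filter (fun S : Finset V => S.card ≤ k)) ⟨∅, by simp⟩
      (fun S => ∑ y ∈ E.powerset.filter (fun y => β ≤ mD J hJ π₁ π₂ cstar S y),
        sceneWeight E p y)
    exact ⟨S, (mem_filter.1 hS).2, h⟩
  set O := OPTD E p J hJ π₁ π₂ cstar k β
  have hO0 : 0 ≤ O := by
    rw [hopt]
    exact sum_nonneg fun y hy => hw y (mem_filter.1 hy).1
  set Q := ∑ y ∈ E.powerset.filter (fun y => ΔD ≤ mD J hJ π₁ π₂ cstar Sβ y),
    sceneWeight E p y with hQ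
  have hlow : O * (β / 2) ≤
      ∑ y ∈ E.powerset, sceneWeight E p y * min β (reachCount y S (firstFor π₁ cstar) : ℝ) := by
    rw [hopt, sum_filter, sum_mul]
    refine sum_le_sum fun y hy => ?_
    split_ifs with h
    · refine mul_le_mul_of_nonneg_left (le_min (by linarith) ?_) (hw y hy)
      have := mD_le_two_mul_reachCount J hJ π₁ π₂ cstar S y
      linarith
    · rw [zero_mul]
      exact mul_nonneg (hw y hy) (le_min hβ0.le (Nat.cast_nonneg _))
  have hup : ∑ y ∈ E.powerset,
      sceneWeight E p y * min β (reachCount y Sβ (firstFor π₁ cstar) : ℝ) ≤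
        Q * (β - ΔD) + ΔD := by
    have hsum : Q * (β - ΔD) + ΔD = ∑ y ∈ E.powerset,
        ((if ΔD ≤ mD J hJ π₁ π₂ cstar Sβ y then sceneWeight E p y else 0) * (β - ΔD) +
          sceneWeight E p y * ΔD) := by
      rw [sum_add_distrib, ← sum_mul, ← sum_mul, sum_sceneWeight, one_mul, hQ, sum_filter]
    rw [hsum]
    refine sum_le_sum fun y hy => ?_
    split_ifs with h
    · have := mul_le_mul_of_nonneg_left
        (min_le_left β (reachCount y Sβ (firstFor π₁ cstar) : ℝ)) (hw y hy)
      linarith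
    · rw [zero_mul, zero_add]
      refine mul_le_mul_of_nonneg_left ((min_le_right _ _).trans ?_) (hw y hy)
      exact (reachCount_le_mD J hJ π₁ π₂ cstar Sβ y).trans (not_le.1 h).le
  have he : 1 < Real.exp 1 := Real.one_lt_exp_iff.2 one_pos
  have hc : (Real.exp 1 - 1) / (3 * Real.exp 1 - 1) ≤ (1 - 1 / Real.exp 1) / 2 := by
    have heq : (1 - 1 / Real.exp 1) / 2 = (Real.exp 1 - 1) / (2 * Real.exp 1) := by
      field_simp
    rw [heq]
    exact div_le_div_of_nonneg_left (by linarith) (by linarith) (by linarith)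
  have hc0 : 0 ≤ 1 - 1 / Real.exp 1 := by
    rw [sub_nonneg, div_le_one (by linarith)]
    exact he.le
  have hmain : (Real.exp 1 - 1) / (3 * Real.exp 1 - 1) * O * β ≤ Q * (β - ΔD) + ΔD := by
    have h1 := mul_le_mul_of_nonneg_right hc (mul_nonneg hO0 hβ0.le)
    have h2 := mul_le_mul_of_nonneg_left hlow hc0
    have h3 := hgreedy S hS
    linarith
  have hαβ : α * β = ΔD := by
    rw [hα]
    field_simp
  have hα1 : α < 1 := by
    rw [hα, div_lt_one hβ0]
    exact hβ
  rw [div_le_iff₀ (by linarith)]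
  refine le_of_mul_le_mul_right ?_ hβ0
  have hexp : Q * (1 - α) * β = Q * (β - ΔD) := by
    rw [← hαβ]
    ring
  rw [hexp, sub_mul, hαβ]
  linarith
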